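/- Division theorem (normal form) for free modules over ℤ/p^ℓℤ[x₁,…,xₙ]: Let R = ℤ/p^ℓℤ, let f be a nonzero homogeneous element of R[x₁,…,xₙ]^d and let g₁,…,g_s be nonzero homogeneous elements of R[x₁,…,xₙ]^d. Then there exist polynomials h₁,…,h_s ∈ R[x₁,…,xₙ] and an element r ∈ R[x₁,…,xₙ]^d such that f = h₁g₁ + ⋯ + h_s g_s + r, such that in_{w,≺}(hᵢgᵢ) ≥ in_{w,≺}(f) in the term order for every i with hᵢgᵢ ≠ 0, such that in_{w,≺}(r) ≥ in_{w,≺}(f) in the term order if r ≠ 0, and such that no term of r is divisible by in_{w,≺}(gᵢ) for any i ∈ {1,…,s}. -/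

import Mathlib

open MvPolynomial

/-- A module monomial `x^u·e_k` of `R[x₁,…,xₙ]^d`, recorded as the pair `(u, k)`. -/
abbrev MMon (n d : ℕ) := (Fin n →₀ ℕ) × Fin d

/-- A term `c·x^u·e_k`, recorded as `(c, (u, k))`. -/
abbrev Term (R : Type*) (n d : ℕ) := R × MMon n d

/-- The strict order on module monomials induced by the monomial order `mo`:
`x^α·e_i ≺ x^β·e_j` iff `x^α ≺ x^β`, or `x^α = x^β` and `i < j`. -/
def mmLt {n d : ℕ} (mo : MonomialOrder (Fin n)) (a b : MMon n d) : Prop :=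
  mo.toSyn a.1 < mo.toSyn b.1 ∨ (a.1 = b.1 ∧ a.2 < b.2)

/-- The dot product `w·u` of a weight vector with an exponent vector. -/
def wdot {n : ℕ} (w : Fin n → ℝ) (u : Fin n →₀ ℕ) : ℝ := ∑ i, w i * (u i : ℝ)

/-- The weight `ν(c) + w·u` of a term `c·x^u·e_k`. -/
def twt {R : Type*} {n d : ℕ} (ν : R → WithTop ℝ) (w : Fin n → ℝ) (t : Term R n d) :
    WithTop ℝ :=
  ν t.1 + (wdot w t.2.1 : ℝ)

/-- The term (pre)order: `c·x^u·e_i ≤ c'·x^{u'}·e_j` iff `ν(c) + w·u < ν(c') + w·u'`, or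
they are equal and `x^u·e_i ⪰ x^{u'}·e_j` (smaller terms are "more initial"). -/
def termLE {R : Type*} {n d : ℕ} (ν : R → WithTop ℝ) (w : Fin n → ℝ)
    (mo : MonomialOrder (Fin n)) (t t' : Term R n d) : Prop :=
  twt ν w t < twt ν w t' ∨
    (twt ν w t = twt ν w t' ∧ (mmLt mo t'.2 t.2 ∨ t.2 = t'.2))

/-- The coefficient of `f ∈ R[x₁,…,xₙ]^d` at the module monomial `m = (u, k)`. -/
def coeffM {R : Type*} [CommSemiring R] {n d : ℕ} (f : Fin d → MvPolynomial (Fin n) R)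
    (m : MMon n d) : R :=
  coeff m.1 (f m.2)

/-- `t` is the initial term `in_{w,≺}(f)` of `f`: it is a term of `f` which is least
in the term order among all terms of `f`. -/
def IsInit {R : Type*} [CommSemiring R] {n d : ℕ} (ν : R → WithTop ℝ) (w : Fin n → ℝ)
    (mo : MonomialOrder (Fin n)) (f : Fin d → MvPolynomial (Fin n) R) (t : Term R n d) : Prop :=
  t.1 ≠ 0 ∧ coeffM f t.2 = t.1 ∧
    ∀ m : MMon n d, coeffM f m ≠ 0 → termLE ν w mo t (coeffM f m, m)

/-- The term `c·x^u·e_k` as an element of `R[x₁,…,xₙ]^d`. -/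
noncomputable def termEl {R : Type*} [CommSemiring R] {n d : ℕ} (t : Term R n d) :
    Fin d → MvPolynomial (Fin n) R :=
  Pi.single t.2.2 (monomial t.2.1 t.1)

/-- The initial submodule `in_{w,≺}(I)`: the submodule generated by the initial terms of
the nonzero elements of `I`. -/
noncomputable def inSub {R : Type*} [CommRing R] {n d : ℕ} (ν : R → WithTop ℝ)
    (w : Fin n → ℝ) (mo : MonomialOrder (Fin n))
    (I : Submodule (MvPolynomial (Fin n) R) (Fin d → MvPolynomial (Fin n) R)) :
    Submodule (MvPolynomial (Fin n) R) (Fin d → MvPolynomial (Fin n) R) :=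
  Submodule.span _ {g | ∃ f ∈ I, f ≠ 0 ∧ ∃ t : Term R n d, IsInit ν w mo f t ∧ g = termEl t}

/-- `f ∈ R[x₁,…,xₙ]^d` is homogeneous (of some degree `δ`). -/
def IsHomog {R : Type*} [CommSemiring R] {n d : ℕ} (f : Fin d → MvPolynomial (Fin n) R) : Prop :=
  ∃ δ : ℕ, ∀ m : MMon n d, coeffM f m ≠ 0 → (∑ i, m.1 i) = δ

/-- The valuation-like map on `ℤ/p^ℓℤ` with values in `ℝ ∪ {∞}`: for nonzero `m`, the
`p`-adic valuation of the canonical representative `m.val`; `v(0) = ∞`. -/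
noncomputable def zmodValR (p ℓ : ℕ) (m : ZMod (p ^ ℓ)) : WithTop ℝ :=
  if m = 0 then ⊤ else ((padicValNat p m.val : ℝ) : WithTop ℝ)

/-!
Multiplying by a monomial preserves the term order, so when the initial term of some `gᵢ` divides
the initial term `t` of `f`, subtracting a monomial multiple of `gᵢ` cancels `t` and leaves only
strictly larger terms; when no such `gᵢ` exists, `t` itself is moved to the remainder. Neither step
raises the degree, because the `gᵢ` are homogeneous. The coefficients have only finitely many
valuations and there are finitely many monomials of bounded degree, so only finitely many positions
in the term order are available and the process stops.

A later step may change the coefficient of the remainder at a position already visited, but only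
by adding something of strictly larger valuation, which does not affect divisibility.
-/

/-- A valuation-like map on a commutative ring which describes divisibility completely and takes
only finitely many values. This abstracts what `v` on `ℤ/p^ℓℤ` provides for division; a field with
the trivial valuation is another example. Since the ring may have zero divisors,
`ν (a * b) = ν a + ν b` is asked for nonzero products only. -/
structure IsDivisibilityValuation {R : Type*} [CommRing R] (ν : R → WithTop ℝ) : Prop where
  map_zero : ν 0 = ⊤
  le_iff_dvd : ∀ a b, ν a ≤ ν b ↔ a ∣ b
  map_mul : ∀ a b, a * b ≠ 0 → ν (a * b) = ν a + ν b
  finite_range : (Set.range ν).Finite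

/-- The position of a term in the term order, as an element of a linear order: the weight is
compared first, ties are broken by the reverse of the order on module monomials. -/
abbrev TermKey {n : ℕ} (d : ℕ) (mo : MonomialOrder (Fin n)) := WithTop ℝ ×ₗ (mo.syn ×ₗ Fin d)ᵒᵈ

/-- The position of the term `t`. -/
noncomputable def termKey {R : Type*} {n d : ℕ} (ν : R → WithTop ℝ) (w : Fin n → ℝ)
    (mo : MonomialOrder (Fin n)) (t : Term R n d) : TermKey d mo :=
  toLex (twt ν w t, OrderDual.toDual (toLex (mo.toSyn t.2.1, t.2.2)))

/-- The product of the scalar term `a·x^u` with the module term `t`. -/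
noncomputable def mulTerm {R : Type*} [Mul R] {n d : ℕ} (u : Fin n →₀ ℕ) (a : R) (t : Term R n d) :
    Term R n d :=
  (a * t.1, (u + t.2.1, t.2.2))

/-- Divisibility of module terms. -/
def TermDvd {R : Type*} [Semigroup R] {n d : ℕ} (t t' : Term R n d) : Prop :=
  t.2.2 = t'.2.2 ∧ t.1 ∣ t'.1 ∧ t.2.1 ≤ t'.2.1

/-- All monomials occurring in `f ∈ R[x₁,…,xₙ]^d` have total degree at most `D`. -/
def DegreeLE {R : Type*} [CommSemiring R] {n d : ℕ} (D : ℕ)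
    (f : Fin d → MvPolynomial (Fin n) R) : Prop :=
  ∀ m : MMon n d, coeffM f m ≠ 0 → m.1.degree ≤ D

/-- `r` is in normal form with respect to the family `g`: no term of `r` is divisible by an initial
term of a member of `g`. -/
def IsNormalForm {R : Type*} [CommSemiring R] {n d : ℕ} (ν : R → WithTop ℝ) (w : Fin n → ℝ)
    (mo : MonomialOrder (Fin n)) {ι : Type*} (g : ι → Fin d → MvPolynomial (Fin n) R)
    (r : Fin d → MvPolynomial (Fin n) R) : Prop :=
  ∀ m : MMon n d, coeffM r m ≠ 0 → ∀ i, ∀ t : Term R n d, IsInit ν w mo (g i) t →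
    ¬ TermDvd t (coeffM r m, m)

section Coefficients

variable {R : Type*} {n d : ℕ}

section CommSemiring

variable [CommSemiring R] {f g : Fin d → MvPolynomial (Fin n) R}

theorem coeffM_ext (h : ∀ m, coeffM f m = coeffM g m) : f = g :=
  funext fun k => MvPolynomial.ext _ _ fun u => h (u, k)

@[simp]
theorem coeffM_zero (m : MMon n d) : coeffM (0 : Fin d → MvPolynomial (Fin n) R) m = 0 := rfl

theorem coeffM_add (f g : Fin d → MvPolynomial (Fin n) R) (m : MMon n d) :
    coeffM (f + g) m = coeffM f m + coeffM g m :=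
  coeff_add _ _ _

theorem coeffM_smul (c : R) (f : Fin d → MvPolynomial (Fin n) R) (m : MMon n d) :
    coeffM (c • f) m = c * coeffM f m :=
  coeff_smul _ _ _

theorem coeffM_termEl_self (t : Term R n d) : coeffM (termEl t) t.2 = t.1 := by
  simp [coeffM, termEl]

theorem coeffM_termEl_of_ne {t : Term R n d} {m : MMon n d} (h : m ≠ t.2) :
    coeffM (termEl t) m = 0 := by
  by_cases hk : m.2 = t.2.2
  · have hu : t.2.1 ≠ m.1 := fun hu => h (Prod.ext hu.symm hk)
    simp [coeffM, termEl, hk, hu]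
  · simp [coeffM, termEl, hk]

theorem coeffM_monomial_smul_mulTerm (u : Fin n →₀ ℕ) (a : R)
    (f : Fin d → MvPolynomial (Fin n) R) (t : Term R n d) :
    coeffM (monomial u a • f) (mulTerm u a t).2 = a * coeffM f t.2 :=
  coeff_monomial_mul _ _ _ _

theorem exists_of_coeffM_monomial_smul_ne_zero {u : Fin n →₀ ℕ} {a : R} {m : MMon n d}
    (h : coeffM (monomial u a • f) m ≠ 0) :
    ∃ m', a * coeffM f m' ≠ 0 ∧
      (coeffM (monomial u a • f) m, m) = mulTerm u a (coeffM f m', m') := by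
  have hle : u ≤ m.1 := by
    by_contra hle
    simp [coeffM, coeff_monomial_mul', hle] at h
  have hm : m = (u + (m.1 - u), m.2) := Prod.ext (add_tsub_cancel_of_le hle).symm rfl
  have hcoeff : coeffM (monomial u a • f) m = a * coeffM f (m.1 - u, m.2) := by
    simp [coeffM, coeff_monomial_mul', hle]
  exact ⟨(m.1 - u, m.2), hcoeff ▸ h, Prod.ext hcoeff hm⟩

theorem finite_setOf_coeffM_ne_zero (f : Fin d → MvPolynomial (Fin n) R) :
    {m : MMon n d | coeffM f m ≠ 0}.Finite := by
  refine (Set.finite_iUnion fun k : Fin d =>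
    (f k).support.finite_toSet.image fun u => ((u, k) : MMon n d)).subset fun m hm => ?_
  exact Set.mem_iUnion.2 ⟨m.2, m.1, mem_support_iff.2 hm, rfl⟩

theorem exists_degreeLE (f : Fin d → MvPolynomial (Fin n) R) : ∃ D, DegreeLE D f := by
  obtain ⟨D, hD⟩ := ((finite_setOf_coeffM_ne_zero f).image fun m => m.1.degree).bddAbove
  exact ⟨D, fun m hm => hD ⟨m, hm, rfl⟩⟩

theorem TermDvd.exists_mulTerm_eq {t t' : Term R n d} (h : TermDvd t t') :
    ∃ u a, mulTerm u a t = t' := by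
  obtain ⟨hk, ⟨a, ha⟩, hu⟩ := h
  exact ⟨t'.2.1 - t.2.1, a,
    Prod.ext ((mul_comm _ _).trans ha.symm) (Prod.ext (tsub_add_cancel_of_le hu) hk)⟩

end CommSemiring

section CommRing

variable [CommRing R] {f g : Fin d → MvPolynomial (Fin n) R}

theorem coeffM_sub (f g : Fin d → MvPolynomial (Fin n) R) (m : MMon n d) :
    coeffM (f - g) m = coeffM f m - coeffM g m :=
  coeff_sub _ _ _ _

theorem DegreeLE.sub {D : ℕ} (hf : DegreeLE D f) (hg : DegreeLE D g) : DegreeLE D (f - g) := by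
  intro m hm
  by_cases hfm : coeffM f m = 0
  · refine hg m fun hgm => hm ?_
    rw [coeffM_sub, hfm, hgm, sub_zero]
  · exact hf m hfm

end CommRing

end Coefficients

section TermOrder

variable {R : Type*} {n d : ℕ} {ν : R → WithTop ℝ} {w : Fin n → ℝ} {mo : MonomialOrder (Fin n)}

theorem termKey_le_termKey {t t' : Term R n d} :
    termKey ν w mo t ≤ termKey ν w mo t' ↔ termLE ν w mo t t' := by
  simp only [termKey, termLE, mmLt, Prod.Lex.toLex_le_toLex, OrderDual.toDual_le_toDual,
    le_iff_lt_or_eq (a := t'.2.2), Prod.ext_iff, EmbeddingLike.apply_eq_iff_eq, and_or_left,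
    or_assoc, eq_comm (a := t'.2.1), eq_comm (a := t'.2.2)]

theorem snd_eq_of_termKey_eq {t t' : Term R n d} (h : termKey ν w mo t = termKey ν w mo t') :
    t.2 = t'.2 := by
  obtain ⟨hu, hk⟩ : mo.toSyn t.2.1 = mo.toSyn t'.2.1 ∧ t.2.2 = t'.2.2 :=
    Prod.mk.inj (congrArg (fun κ => ofLex (OrderDual.ofDual (ofLex κ).2)) h)
  exact Prod.ext (mo.toSyn.injective hu) hk

theorem finite_termKey_image_degree_le (hν : (Set.range ν).Finite) (D : ℕ) :
    (termKey ν w mo '' {t : Term R n d | t.2.1.degree ≤ D}).Finite := by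
  let keyOfValue (x : WithTop ℝ × MMon n d) : TermKey d mo :=
    toLex (x.1 + (wdot w x.2.1 : ℝ), OrderDual.toDual (toLex (mo.toSyn x.2.1, x.2.2)))
  have hfin : (Set.range ν ×ˢ ({u : Fin n →₀ ℕ | u.degree ≤ D} ×ˢ
      (Set.univ : Set (Fin d)))).Finite :=
    hν.prod ((Finsupp.finite_of_degree_le D).prod Set.finite_univ)
  refine (hfin.image keyOfValue).subset ?_
  rintro _ ⟨t, ht, rfl⟩
  exact ⟨(ν t.1, t.2), ⟨⟨t.1, rfl⟩, ht, trivial⟩, rfl⟩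

theorem wdot_add (w : Fin n → ℝ) (u u' : Fin n →₀ ℕ) : wdot w (u + u') = wdot w u + wdot w u' := by
  simp [wdot, mul_add, Finset.sum_add_distrib]

variable [CommSemiring R] {f : Fin d → MvPolynomial (Fin n) R} {t : Term R n d}

variable (ν w mo) in
theorem exists_isInit (hf : f ≠ 0) : ∃ t, IsInit ν w mo f t := by
  have hne : {m : MMon n d | coeffM f m ≠ 0}.Nonempty := by
    by_contra! h
    exact hf (coeffM_ext fun m => by simpa using Set.eq_empty_iff_forall_notMem.1 h m)
  obtain ⟨m, hm, hmin⟩ := Set.exists_min_image _ (fun m => termKey ν w mo (coeffM f m, m))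
    (finite_setOf_coeffM_ne_zero f) hne
  exact ⟨(coeffM f m, m), hm, rfl, fun m' hm' => termKey_le_termKey.1 (hmin m' hm')⟩

theorem IsInit.coeffM_ne_zero (ht : IsInit ν w mo f t) : coeffM f t.2 ≠ 0 :=
  ht.2.1 ▸ ht.1

theorem isInit_termEl (ht : t.1 ≠ 0) : IsInit ν w mo (termEl t) t := by
  refine ⟨ht, coeffM_termEl_self t, fun m hm => ?_⟩
  obtain rfl : m = t.2 := by
    by_contra h
    exact hm (coeffM_termEl_of_ne h)
  rw [coeffM_termEl_self]
  exact termKey_le_termKey.1 le_rfl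

theorem degreeLE_termEl {D : ℕ} (ht : t.2.1.degree ≤ D) : DegreeLE D (termEl t) := by
  intro m hm
  obtain rfl : m = t.2 := by
    by_contra h
    exact hm (coeffM_termEl_of_ne h)
  exact ht

theorem IsHomog.degreeLE_monomial_smul {D : ℕ} (hf : IsHomog f) (ht : IsInit ν w mo f t)
    {u : Fin n →₀ ℕ} {a : R} (hD : (mulTerm u a t).2.1.degree ≤ D) :
    DegreeLE D (monomial u a • f) := by
  intro m hm
  obtain ⟨δ, hδ⟩ := hf
  obtain ⟨m', hm', heq⟩ := exists_of_coeffM_monomial_smul_ne_zero hm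
  have hdeg : m'.1.degree = t.2.1.degree := by
    rw [Finsupp.degree_eq_sum, Finsupp.degree_eq_sum, hδ m' (right_ne_zero_of_mul hm'),
      hδ t.2 ht.coeffM_ne_zero]
  obtain rfl : m = (u + m'.1, m'.2) := congrArg Prod.snd heq
  simpa [mulTerm, hdeg] using hD

end TermOrder

namespace IsDivisibilityValuation

variable {R : Type*} [CommRing R] {ν : R → WithTop ℝ} {n d : ℕ} {w : Fin n → ℝ}
  {mo : MonomialOrder (Fin n)}

theorem eq_top_iff (hν : IsDivisibilityValuation ν) {a : R} : ν a = ⊤ ↔ a = 0 := by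
  rw [← top_le_iff, ← hν.map_zero, hν.le_iff_dvd, zero_dvd_iff]

theorem termKey_le_of_dvd (hν : IsDivisibilityValuation ν) {a b : R} (h : a ∣ b) (m : MMon n d) :
    termKey ν w mo (a, m) ≤ termKey ν w mo (b, m) :=
  Prod.Lex.toLex_mono ⟨add_le_add_left ((hν.le_iff_dvd a b).2 h) _, le_rfl⟩

theorem termKey_mulTerm_le (hν : IsDivisibilityValuation ν) {u : Fin n →₀ ℕ} {a : R}
    {t t' : Term R n d} (ht : a * t.1 ≠ 0) (ht' : a * t'.1 ≠ 0)
    (h : termKey ν w mo t ≤ termKey ν w mo t') :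
    termKey ν w mo (mulTerm u a t) ≤ termKey ν w mo (mulTerm u a t') := by
  have twt_mulTerm : ∀ s : Term R n d, a * s.1 ≠ 0 →
      twt ν w (mulTerm u a s) = (ν a + (wdot w u : ℝ)) + twt ν w s := by
    intro s hs
    rw [twt, twt, mulTerm, hν.map_mul _ _ hs, wdot_add, WithTop.coe_add, add_add_add_comm]
  have hne_top : ν a + (wdot w u : ℝ) ≠ ⊤ :=
    WithTop.add_ne_top.2 ⟨mt hν.eq_top_iff.1 (left_ne_zero_of_mul ht), WithTop.coe_ne_top⟩
  rw [termKey_le_termKey] at h ⊢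
  rw [termLE, twt_mulTerm t ht, twt_mulTerm t' ht', WithTop.add_lt_add_iff_left hne_top,
    WithTop.add_left_inj hne_top]
  simpa [termLE, mmLt, mulTerm, Prod.ext_iff] using h

theorem isInit_monomial_smul (hν : IsDivisibilityValuation ν)
    {g : Fin d → MvPolynomial (Fin n) R} {t : Term R n d} (ht : IsInit ν w mo g t)
    {u : Fin n →₀ ℕ} {a : R} (ha : a * t.1 ≠ 0) :
    IsInit ν w mo (monomial u a • g) (mulTerm u a t) := by
  refine ⟨ha, ?_, fun m hm => ?_⟩
  · rw [coeffM_monomial_smul_mulTerm, ht.2.1, mulTerm]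
  · obtain ⟨m', hm', heq⟩ := exists_of_coeffM_monomial_smul_ne_zero hm
    rw [heq, ← termKey_le_termKey]
    exact hν.termKey_mulTerm_le ha hm'
      (termKey_le_termKey.2 (ht.2.2 m' (right_ne_zero_of_mul hm')))

variable (hν : IsDivisibilityValuation ν)

/-- The elements of `R[x₁,…,xₙ]^d` all of whose terms have their position in the upper set `U`:
the filtration of the free module by the term order. General upper sets are used because both
closed and open half-lines of positions occur. -/
def termsIn (w : Fin n → ℝ) (mo : MonomialOrder (Fin n)) (U : UpperSet (TermKey d mo)) :
    Submodule R (Fin d → MvPolynomial (Fin n) R) where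
  carrier := {f | ∀ m, coeffM f m ≠ 0 → termKey ν w mo (coeffM f m, m) ∈ U}
  zero_mem' m hm := absurd (coeffM_zero m) hm
  add_mem' := by
    intro f g hf hg m hm
    rw [coeffM_add] at hm ⊢
    rcases le_total (ν (coeffM f m)) (ν (coeffM g m)) with h | h
    · have hdvd := dvd_add dvd_rfl ((hν.le_iff_dvd _ _).1 h)
      exact U.upper (hν.termKey_le_of_dvd hdvd m) (hf m (ne_zero_of_dvd_ne_zero hm hdvd))
    · have hdvd := dvd_add ((hν.le_iff_dvd _ _).1 h) dvd_rfl
      exact U.upper (hν.termKey_le_of_dvd hdvd m) (hg m (ne_zero_of_dvd_ne_zero hm hdvd))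
  smul_mem' := by
    intro c f hf m hm
    rw [coeffM_smul] at hm ⊢
    exact U.upper (hν.termKey_le_of_dvd (dvd_mul_left _ _) m) (hf m (right_ne_zero_of_mul hm))

variable {U : UpperSet (TermKey d mo)} {f q : Fin d → MvPolynomial (Fin n) R} {t : Term R n d}

theorem mem_termsIn_iff_of_isInit (ht : IsInit ν w mo f t) :
    f ∈ hν.termsIn w mo U ↔ termKey ν w mo t ∈ U := by
  refine ⟨fun hf => ?_, fun htU m hm => U.upper (termKey_le_termKey.2 (ht.2.2 m hm)) htU⟩
  have ht_eq : (coeffM f t.2, t.2) = t := Prod.ext ht.2.1 rfl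
  simpa only [ht_eq] using hf t.2 ht.coeffM_ne_zero

theorem sub_mem_termsIn_Ioi (hf : IsInit ν w mo f t) (hq : IsInit ν w mo q t) :
    f - q ∈ hν.termsIn w mo (UpperSet.Ioi (termKey ν w mo t)) := by
  have hmem : f - q ∈ hν.termsIn w mo (UpperSet.Ici (termKey ν w mo t)) :=
    sub_mem ((hν.mem_termsIn_iff_of_isInit hf).2 (UpperSet.mem_Ici_iff.2 le_rfl))
      ((hν.mem_termsIn_iff_of_isInit hq).2 (UpperSet.mem_Ici_iff.2 le_rfl))
  intro m hm
  refine lt_of_le_of_ne (UpperSet.mem_Ici_iff.1 (hmem m hm)) fun heq => hm ?_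
  obtain rfl : t.2 = m := snd_eq_of_termKey_eq heq
  rw [coeffM_sub, hf.2.1, hq.2.1, sub_self]

theorem isNormalForm_add_termEl {ι : Type*} {g : ι → Fin d → MvPolynomial (Fin n) R}
    (hq : IsNormalForm ν w mo g q) (hq_mem : q ∈ hν.termsIn w mo (UpperSet.Ioi (termKey ν w mo t)))
    (ht : t.1 ≠ 0) (hirred : ∀ i t', IsInit ν w mo (g i) t' → ¬ TermDvd t' t) :
    IsNormalForm ν w mo g (q + termEl t) := by
  intro m hm i t' ht' hdvd
  rw [coeffM_add] at hm hdvd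
  by_cases hmt : m = t.2
  · subst hmt
    rw [coeffM_termEl_self] at hdvd
    have hndvd : ¬ coeffM q t.2 ∣ t.1 := fun h =>
      (hq_mem t.2 (ne_zero_of_dvd_ne_zero ht h)).not_ge (hν.termKey_le_of_dvd h t.2)
    have hsum_dvd : coeffM q t.2 + t.1 ∣ t.1 := by
      rcases le_total (ν (coeffM q t.2 + t.1)) (ν (coeffM q t.2)) with h | h
      · exact (dvd_add_right ((hν.le_iff_dvd _ _).1 h)).1 dvd_rfl
      · exact absurd ((dvd_add_right dvd_rfl).1 ((hν.le_iff_dvd _ _).1 h)) hndvd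
    exact hirred i t' ht' ⟨hdvd.1, hdvd.2.1.trans hsum_dvd, hdvd.2.2⟩
  · rw [coeffM_termEl_of_ne hmt, add_zero] at hm hdvd
    exact hq m hm i t' ht' hdvd

end IsDivisibilityValuation

/-- `f` can be divided by the family `g`: it has quotients `h` and a remainder `r` in normal form,
such that neither the products `h i • g i` nor `r` have terms preceding all terms of `f`. This last
condition is phrased through the filtration `termsIn` so that it is stable under sums. -/
def HasDivision {R : Type*} [CommRing R] {ν : R → WithTop ℝ} (hν : IsDivisibilityValuation ν)
    {n d : ℕ} (w : Fin n → ℝ) (mo : MonomialOrder (Fin n)) {ι : Type*} [Fintype ι]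
    (g : ι → Fin d → MvPolynomial (Fin n) R) (f : Fin d → MvPolynomial (Fin n) R) : Prop :=
  ∃ (h : ι → MvPolynomial (Fin n) R) (r : Fin d → MvPolynomial (Fin n) R),
    f = (∑ i, h i • g i) + r ∧ IsNormalForm ν w mo g r ∧
      ∀ U : UpperSet (TermKey d mo), f ∈ hν.termsIn w mo U →
        (∀ i, h i • g i ∈ hν.termsIn w mo U) ∧ r ∈ hν.termsIn w mo U

section Division

variable {R : Type*} [CommRing R] {ν : R → WithTop ℝ} {hν : IsDivisibilityValuation ν}
  {n d : ℕ} {w : Fin n → ℝ} {mo : MonomialOrder (Fin n)} {ι : Type*} [Fintype ι]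
  {g : ι → Fin d → MvPolynomial (Fin n) R} {f : Fin d → MvPolynomial (Fin n) R} {t : Term R n d}

theorem hasDivision_zero : HasDivision hν w mo g 0 := by
  refine ⟨0, 0, by simp, fun m hm => absurd (coeffM_zero m) hm, fun U _ => ⟨fun i => ?_, ?_⟩⟩
  · simp
  · exact zero_mem _

theorem HasDivision.of_sub_monomial_smul (hf : IsInit ν w mo f t) {u : Fin n →₀ ℕ} {a : R}
    {i : ι} (hq : IsInit ν w mo (monomial u a • g i) t)
    (hdiv : HasDivision hν w mo g (f - monomial u a • g i)) : HasDivision hν w mo g f := by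
  classical
  obtain ⟨h, r, hsum, hnf, hmem⟩ := hdiv
  have hsmul : ∀ j, (h + Pi.single i (monomial u a) : ι → MvPolynomial (Fin n) R) j • g j =
      h j • g j + (Pi.single i (monomial u a • g i) : ι → Fin d → MvPolynomial (Fin n) R) j := by
    intro j
    rcases eq_or_ne j i with rfl | hj
    · simp [add_smul]
    · simp [hj]
  refine ⟨h + Pi.single i (monomial u a), r, ?_, hnf, fun U hfU => ?_⟩
  · rw [Finset.sum_congr rfl fun j _ => hsmul j, Finset.sum_add_distrib,
      Fintype.sum_pi_single', add_right_comm, ← hsum, sub_add_cancel]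
  · have hqU : monomial u a • g i ∈ hν.termsIn w mo U :=
      (hν.mem_termsIn_iff_of_isInit hq).2 ((hν.mem_termsIn_iff_of_isInit hf).1 hfU)
    obtain ⟨hh, hr⟩ := hmem U (sub_mem hfU hqU)
    refine ⟨fun j => ?_, hr⟩
    rw [hsmul]
    refine add_mem (hh j) ?_
    rcases eq_or_ne j i with rfl | hj
    · rwa [Pi.single_eq_same]
    · rw [Pi.single_eq_of_ne hj]
      exact zero_mem _

theorem HasDivision.of_sub_termEl (hf : IsInit ν w mo f t)
    (hirred : ∀ i t', IsInit ν w mo (g i) t' → ¬ TermDvd t' t)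
    (hdiv : HasDivision hν w mo g (f - termEl t)) : HasDivision hν w mo g f := by
  obtain ⟨h, r, hsum, hnf, hmem⟩ := hdiv
  have hterm := isInit_termEl (ν := ν) (w := w) (mo := mo) hf.1
  have hr_Ioi := (hmem _ (hν.sub_mem_termsIn_Ioi hf hterm)).2
  refine ⟨h, r + termEl t, ?_, hν.isNormalForm_add_termEl hnf hr_Ioi hf.1 hirred, fun U hfU => ?_⟩
  · rw [← add_assoc, ← hsum, sub_add_cancel]
  · have htermU : termEl t ∈ hν.termsIn w mo U :=
      (hν.mem_termsIn_iff_of_isInit hterm).2 ((hν.mem_termsIn_iff_of_isInit hf).1 hfU)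
    obtain ⟨hh, hr⟩ := hmem U (sub_mem hfU htermU)
    exact ⟨hh, add_mem hr htermU⟩

theorem hasDivision_of_forall_isInit (hg : ∀ i, IsHomog (g i)) {D : ℕ} (hfD : DegreeLE D f)
    (hf : IsInit ν w mo f t)
    (ih : ∀ q, DegreeLE D q → IsInit ν w mo q t → HasDivision hν w mo g (f - q)) :
    HasDivision hν w mo g f := by
  have htD : t.2.1.degree ≤ D := hfD t.2 hf.coeffM_ne_zero
  by_cases hdvd : ∃ i t', IsInit ν w mo (g i) t' ∧ TermDvd t' t
  · obtain ⟨i, t', ht', hdvd⟩ := hdvd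
    obtain ⟨u, a, rfl⟩ := hdvd.exists_mulTerm_eq
    have hq := hν.isInit_monomial_smul (u := u) ht' hf.1
    exact .of_sub_monomial_smul hf hq (ih _ ((hg i).degreeLE_monomial_smul ht' htD) hq)
  · push Not at hdvd
    exact .of_sub_termEl hf hdvd (ih _ (degreeLE_termEl htD) (isInit_termEl hf.1))

variable (hν w mo f) in
theorem hasDivision_of_isHomog (hg : ∀ i, IsHomog (g i)) : HasDivision hν w mo g f := by
  obtain ⟨D, hfD⟩ := exists_degreeLE f
  let S : Set (TermKey d mo) := termKey ν w mo '' {t : Term R n d | t.2.1.degree ≤ D}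
  have hS : S.WellFoundedOn (· > ·) :=
    (finite_termKey_image_degree_le hν.finite_range D).wellFoundedOn
  have key_mem {f t} (hfD : DegreeLE D f) (ht : IsInit ν w mo f t) : termKey ν w mo t ∈ S :=
    ⟨t, hfD t.2 ht.coeffM_ne_zero, rfl⟩
  by_cases hf0 : f = 0
  · exact hf0 ▸ hasDivision_zero
  obtain ⟨t, ht⟩ := exists_isInit ν w mo hf0
  refine hS.induction (P := fun κ => ∀ f t, DegreeLE D f → IsInit ν w mo f t →
    termKey ν w mo t = κ → HasDivision hν w mo g f) (key_mem hfD ht) ?_ f t hfD ht rfl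
  rintro _ - ih f t hfD ht rfl
  refine hasDivision_of_forall_isInit hg hfD ht fun q hqD hq => ?_
  by_cases hfq : f - q = 0
  · exact hfq ▸ hasDivision_zero
  obtain ⟨t', ht'⟩ := exists_isInit ν w mo hfq
  have hlt := (hν.mem_termsIn_iff_of_isInit ht').1 (hν.sub_mem_termsIn_Ioi ht hq)
  exact ih _ (key_mem (hfD.sub hqD) ht') hlt _ t' (hfD.sub hqD) ht' rfl

end Division

theorem division_theorem_module_zmod_general {R : Type*} [CommRing R] {ν : R → WithTop ℝ}
    (hν : IsDivisibilityValuation ν) {n d : ℕ} (w : Fin n → ℝ) (mo : MonomialOrder (Fin n))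
    {ι : Type*} [Fintype ι] (f : Fin d → MvPolynomial (Fin n) R)
    (g : ι → Fin d → MvPolynomial (Fin n) R) (hg : ∀ i, IsHomog (g i)) :
    ∃ (h : ι → MvPolynomial (Fin n) R) (r : Fin d → MvPolynomial (Fin n) R),
      f = (∑ i, h i • g i) + r ∧
      (∀ i, ∀ t t' : Term R n d, IsInit ν w mo f t → IsInit ν w mo (h i • g i) t' →
        termLE ν w mo t t') ∧
      (∀ t t' : Term R n d, IsInit ν w mo f t → IsInit ν w mo r t' → termLE ν w mo t t') ∧
      IsNormalForm ν w mo g r := by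
  obtain ⟨h, r, hsum, hnf, hmem⟩ := hasDivision_of_isHomog hν w mo f hg
  have termLE_of_mem : ∀ q t t', (∀ U, f ∈ hν.termsIn w mo U → q ∈ hν.termsIn w mo U) →
      IsInit ν w mo f t → IsInit ν w mo q t' → termLE ν w mo t t' := by
    intro q t t' hq ht ht'
    have hqU := hq (UpperSet.Ici (termKey ν w mo t))
      ((hν.mem_termsIn_iff_of_isInit ht).2 (UpperSet.mem_Ici_iff.2 le_rfl))
    exact termKey_le_termKey.1 ((hν.mem_termsIn_iff_of_isInit ht').1 hqU)
  exact ⟨h, r, hsum, fun i t t' => termLE_of_mem _ t t' fun U hU => (hmem U hU).1 i,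
    fun t t' => termLE_of_mem _ t t' fun U hU => (hmem U hU).2, hnf⟩

section ZMod

theorem natCast_dvd_iff_dvd_val {N k : ℕ} [NeZero N] (hk : k ∣ N) (c : ZMod N) :
    (k : ZMod N) ∣ c ↔ k ∣ c.val := by
  constructor
  · intro h
    have h' := map_dvd (ZMod.castHom hk (ZMod k)) h
    rwa [map_natCast, ZMod.natCast_self, zero_dvd_iff, ZMod.castHom_apply,
      ← ZMod.natCast_val, ZMod.natCast_eq_zero_iff] at h'
  · intro h
    simpa using Nat.cast_dvd_cast (α := ZMod N) h

variable {p ℓ : ℕ} [hp : Fact p.Prime] {c : ZMod (p ^ ℓ)}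

theorem prime_pow_eq_zero_iff {j : ℕ} : (p : ZMod (p ^ ℓ)) ^ j = 0 ↔ ℓ ≤ j := by
  rw [← Nat.cast_pow, ZMod.natCast_eq_zero_iff, Nat.pow_dvd_pow_iff_le_right hp.out.one_lt]

theorem associated_prime_pow_padicValNat_val (hc : c ≠ 0) :
    Associated ((p : ZMod (p ^ ℓ)) ^ padicValNat p c.val) c := by
  have hval : c.val ≠ 0 := (ZMod.val_ne_zero c).2 hc
  obtain ⟨k, hk⟩ : p ^ padicValNat p c.val ∣ c.val := pow_padicValNat_dvd
  have hpk : ¬ p ∣ k := fun h => pow_succ_padicValNat_not_dvd hval <| by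
    rw [pow_succ]
    exact (mul_dvd_mul_left _ h).trans hk.symm.dvd
  have hunit : IsUnit (k : ZMod (p ^ ℓ)) :=
    (ZMod.isUnit_iff_coprime _ _).2 ((hp.out.coprime_iff_not_dvd.2 hpk).symm.pow_right ℓ)
  refine ⟨hunit.unit, ?_⟩
  rw [hunit.unit_spec, ← Nat.cast_pow, ← Nat.cast_mul, ← hk, ZMod.natCast_zmod_val]

theorem prime_pow_dvd_iff_le_padicValNat_val (hc : c ≠ 0) {j : ℕ} :
    (p : ZMod (p ^ ℓ)) ^ j ∣ c ↔ j ≤ padicValNat p c.val := by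
  refine ⟨fun h => ?_,
    fun h => (pow_dvd_pow _ h).trans (associated_prime_pow_padicValNat_val hc).dvd⟩
  have hj : j < ℓ := by
    by_contra! hj
    exact hc (zero_dvd_iff.1 (prime_pow_eq_zero_iff (p := p) |>.2 hj ▸ h))
  rw [← Nat.cast_pow, natCast_dvd_iff_dvd_val (pow_dvd_pow p hj.le)] at h
  exact (padicValNat_dvd_iff_le ((ZMod.val_ne_zero c).2 hc)).1 h

theorem prime_pow_dvd_prime_pow_iff {j k : ℕ} (hk : k < ℓ) :
    (p : ZMod (p ^ ℓ)) ^ j ∣ (p : ZMod (p ^ ℓ)) ^ k ↔ j ≤ k := by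
  have hval : ((p : ZMod (p ^ ℓ)) ^ k).val = p ^ k := by
    rw [← Nat.cast_pow, ZMod.val_natCast_of_lt (Nat.pow_lt_pow_right hp.out.one_lt hk)]
  rw [prime_pow_dvd_iff_le_padicValNat_val (mt prime_pow_eq_zero_iff.1 hk.not_ge), hval,
    padicValNat.prime_pow]

theorem padicValNat_val_mul {a b : ZMod (p ^ ℓ)} (hab : a * b ≠ 0) :
    padicValNat p (a * b).val = padicValNat p a.val + padicValNat p b.val := by
  have hassoc := (associated_prime_pow_padicValNat_val (left_ne_zero_of_mul hab)).mul_mul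
    (associated_prime_pow_padicValNat_val (right_ne_zero_of_mul hab))
  rw [← pow_add] at hassoc
  have hlt : padicValNat p a.val + padicValNat p b.val < ℓ := by
    rw [← not_le, ← prime_pow_eq_zero_iff (p := p)]
    exact hassoc.ne_zero_iff.2 hab
  refine eq_of_forall_le_iff fun j => ?_
  rw [← prime_pow_dvd_iff_le_padicValNat_val hab, ← hassoc.dvd_iff_dvd_right,
    prime_pow_dvd_prime_pow_iff hlt]

theorem isDivisibilityValuation_zmodValR : IsDivisibilityValuation (zmodValR p ℓ) where
  map_zero := if_pos rfl
  le_iff_dvd a b := by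
    by_cases hb : b = 0
    · simp [zmodValR, hb]
    by_cases ha : a = 0
    · simp [zmodValR, ha, hb]
    rw [← (associated_prime_pow_padicValNat_val ha).dvd_iff_dvd_left,
      prime_pow_dvd_iff_le_padicValNat_val hb]
    simp [zmodValR, ha, hb]
  map_mul a b hab := by
    have ha := left_ne_zero_of_mul hab
    have hb := right_ne_zero_of_mul hab
    simp [zmodValR, ha, hb, hab, padicValNat_val_mul hab]
  finite_range := Set.finite_range _

end ZMod

/-- **Division theorem (normal form) for free modules over `ℤ/p^ℓℤ[x₁,…,xₙ]`.**
Given a nonzero homogeneous `f` and nonzero homogeneous `g₁,…,g_s` in `R[x₁,…,xₙ]^d`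
(`R = ℤ/p^ℓℤ`), there are `h₁,…,h_s ∈ R[x₁,…,xₙ]` and `r ∈ R[x₁,…,xₙ]^d` with
`f = Σ hᵢgᵢ + r`, `in_{w,≺}(hᵢgᵢ) ≥ in_{w,≺}(f)` whenever `hᵢgᵢ ≠ 0`,
`in_{w,≺}(r) ≥ in_{w,≺}(f)` if `r ≠ 0`, and no term of `r` divisible by any `in_{w,≺}(gᵢ)`
(a term `c'·x^β·e_j` divides `c·x^α·e_i` iff `i = j`, `c' ∣ c` in `R` and `x^β ∣ x^α`). -/
theorem division_theorem_module_zmod {p ℓ : ℕ} (hp : p.Prime) (hℓ : 1 ≤ ℓ) {n d : ℕ}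
    (w : Fin n → ℝ) (mo : MonomialOrder (Fin n)) {s : ℕ}
    (f : Fin d → MvPolynomial (Fin n) (ZMod (p ^ ℓ))) (hf : f ≠ 0) (hfhom : IsHomog f)
    (g : Fin s → Fin d → MvPolynomial (Fin n) (ZMod (p ^ ℓ)))
    (hg : ∀ i, g i ≠ 0) (hghom : ∀ i, IsHomog (g i)) :
    ∃ (h : Fin s → MvPolynomial (Fin n) (ZMod (p ^ ℓ)))
      (r : Fin d → MvPolynomial (Fin n) (ZMod (p ^ ℓ))),
      f = (∑ i, h i • g i) + r ∧
      (∀ i, h i • g i ≠ 0 → ∀ t t' : Term (ZMod (p ^ ℓ)) n d,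
        IsInit (zmodValR p ℓ) w mo f t → IsInit (zmodValR p ℓ) w mo (h i • g i) t' →
          termLE (zmodValR p ℓ) w mo t t') ∧
      (r ≠ 0 → ∀ t t' : Term (ZMod (p ^ ℓ)) n d,
        IsInit (zmodValR p ℓ) w mo f t → IsInit (zmodValR p ℓ) w mo r t' →
          termLE (zmodValR p ℓ) w mo t t') ∧
      (∀ m : MMon n d, coeffM r m ≠ 0 → ∀ i, ∀ t : Term (ZMod (p ^ ℓ)) n d,
        IsInit (zmodValR p ℓ) w mo (g i) t →
          ¬ (t.2.2 = m.2 ∧ t.1 ∣ coeffM r m ∧ t.2.1 ≤ m.1)) := by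
  have := Fact.mk hp
  obtain ⟨h, r, hsum, hh, hr, hnf⟩ := division_theorem_module_zmod_general
    (isDivisibilityValuation_zmodValR (p := p) (ℓ := ℓ)) w mo f g hghom
  exact ⟨h, r, hsum, fun i _ => hh i, fun _ => hr, hnf⟩
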